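/- Let Q be a plurisubharmonic real polynomial on C² that is not harmonic (as a function on C² ≅ R⁴), homogeneous of degree 2p in z₁ and of degree 2q in z₂, i.e., Q(t z₁, z₂) = t^{2p} Q(z₁, z₂) and Q(z₁, t z₂) = t^{2q} Q(z₁, z₂) for all real t > 0. Then ∫₀^{2π} ∫₀^{2π} Q(e^{iθ}, e^{iτ}) dθ dτ > 0; equivalently, the coefficient of the monomial |z₁|^{2p}|z₂|^{2q} in Q is strictly positive. -/

import Mathlib

/-!
In polar coordinates `r²Δ = (r ∂/∂r)² + (∂/∂θ)²`. If `u` is positively homogeneous of degree `a`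
then `(r ∂/∂r)² u = a² u` by Euler's identity, while angular derivatives average to zero over
circles centred at the origin; hence the circle averages of `u` and `Δu` satisfy
`r² ⟨Δu⟩ = a² ⟨u⟩`.

Applied to the slices of `Q` in each variable, this turns a nonpositive average of `Q` over the unit
torus, which by homogeneity is nonpositive over every torus, into a nonpositive average of the
Laplacians of the slices. These are continuous and nonnegative, so they vanish on every torus, hence
everywhere, and `Q` is harmonic.
-/

open Complex ComplexConjugate Metric Set

noncomputable section

/-- Wirtinger derivative `∂f` in the complex direction `e`. -/
def wd (f : ℂ × ℂ → ℂ) (e : ℂ × ℂ) (z : ℂ × ℂ) : ℂ :=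
  (1 / 2) * (fderiv ℝ f z e - Complex.I * fderiv ℝ f z (Complex.I • e))

/-- Conjugate Wirtinger derivative `∂̄f` in the complex direction `e`. -/
def wdbar (f : ℂ × ℂ → ℂ) (e : ℂ × ℂ) (z : ℂ × ℂ) : ℂ :=
  (1 / 2) * (fderiv ℝ f z e + Complex.I * fderiv ℝ f z (Complex.I • e))

/-- Mixed second derivative `∂²P/∂z_(ej)∂z̄_(ek)` of a real-valued function. -/
def mixedDeriv (P : ℂ × ℂ → ℝ) (ej ek : ℂ × ℂ) (z : ℂ × ℂ) : ℂ :=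
  wd (wdbar (fun w => (P w : ℂ)) ek) ej z

/-- The Levi form of `P` at `z` in the direction `v`. -/
def leviForm (P : ℂ × ℂ → ℝ) (z v : ℂ × ℂ) : ℂ :=
  mixedDeriv P (1, 0) (1, 0) z * v.1 * conj v.1 +
  mixedDeriv P (1, 0) (0, 1) z * v.1 * conj v.2 +
  mixedDeriv P (0, 1) (1, 0) z * v.2 * conj v.1 +
  mixedDeriv P (0, 1) (0, 1) z * v.2 * conj v.2

/-- `P` is plurisubharmonic on all of `ℂ²`. -/
def IsPsh (P : ℂ × ℂ → ℝ) : Prop := ∀ z v, 0 ≤ (leviForm P z v).re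

/-- `P` is strictly plurisubharmonic at `z`. -/
def IsStrictPshAt (P : ℂ × ℂ → ℝ) (z : ℂ × ℂ) : Prop :=
  ∀ v, v ≠ 0 → 0 < (leviForm P z v).re

/-- The Levi-degeneracy set of `P`. -/
def leviDegen (P : ℂ × ℂ → ℝ) : Set (ℂ × ℂ) :=
  {z | ¬ IsStrictPshAt P z}

/-- One-variable Wirtinger derivative. -/
def wd1 (f : ℂ → ℂ) (z : ℂ) : ℂ :=
  (1 / 2) * (fderiv ℝ f z 1 - Complex.I * fderiv ℝ f z Complex.I)

def wdbar1 (f : ℂ → ℂ) (z : ℂ) : ℂ :=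
  (1 / 2) * (fderiv ℝ f z 1 + Complex.I * fderiv ℝ f z Complex.I)

/-- The Laplacian of a function on `ℂ`, as `4 ∂∂̄`. -/
def lap (u : ℂ → ℝ) (z : ℂ) : ℂ := 4 * wd1 (wdbar1 fun w => (u w : ℂ)) z

def IsHarmonic (u : ℂ → ℝ) : Prop := ∀ z, lap u z = 0

def Subharmonic (u : ℂ → ℝ) : Prop := ∀ z, 0 ≤ (lap u z).re

/-- The Laplacian of a function on `ℂ² ≅ ℝ⁴`. -/
def lap2 (P : ℂ × ℂ → ℝ) (z : ℂ × ℂ) : ℂ :=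
  4 * (mixedDeriv P (1, 0) (1, 0) z + mixedDeriv P (0, 1) (0, 1) z)

/-- `P` is a real-valued polynomial in `z₁, z̄₁, z₂, z̄₂`. -/
def IsRealPoly2 (P : ℂ × ℂ → ℝ) : Prop :=
  ∃ Q : MvPolynomial (Fin 4) ℂ,
    ∀ z : ℂ × ℂ, (P z : ℂ) = MvPolynomial.eval ![z.1, conj z.1, z.2, conj z.2] Q

/-- `u` is a real-valued polynomial in `z, z̄`. -/
def IsRealPoly1 (u : ℂ → ℝ) : Prop :=
  ∃ Q : MvPolynomial (Fin 2) ℂ,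
    ∀ z : ℂ, (u z : ℂ) = MvPolynomial.eval ![z, conj z] Q

/-- `F` is a holomorphic polynomial map on `ℂ²`. -/
def IsPolyMap2 (F : ℂ × ℂ → ℂ) : Prop :=
  ∃ Q : MvPolynomial (Fin 2) ℂ, ∀ z : ℂ × ℂ, F z = MvPolynomial.eval ![z.1, z.2] Q

/-- `P` has no pluriharmonic terms: in its (unique) monomial expansion in
`z₁, z̄₁, z₂, z̄₂` every monomial involves both a conjugated and an
unconjugated variable. Indexing: `0 ↦ z₁`, `1 ↦ z̄₁`, `2 ↦ z₂`, `3 ↦ z̄₂`. -/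
def NoPluriharmonicTerms (P : ℂ × ℂ → ℝ) : Prop :=
  ∃ Q : MvPolynomial (Fin 4) ℂ,
    (∀ z : ℂ × ℂ, (P z : ℂ) = MvPolynomial.eval ![z.1, conj z.1, z.2, conj z.2] Q) ∧
    ∀ m ∈ Q.support, (m 1 ≠ 0 ∨ m 3 ≠ 0) ∧ (m 0 ≠ 0 ∨ m 2 ≠ 0)

/-- `P` is pluriharmonic: the real part of an entire function. -/
def IsPluriharmonic (P : ℂ × ℂ → ℝ) : Prop :=
  ∃ f : ℂ × ℂ → ℂ, Differentiable ℂ f ∧ ∀ z, P z = (f z).re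

/-- `P` is homogeneous of degree `d`. -/
def HomogeneousDeg (P : ℂ × ℂ → ℝ) (d : ℕ) : Prop :=
  ∀ t : ℝ, 0 < t → ∀ z : ℂ × ℂ, P (t • z) = t ^ d * P z

/-- The directions `ζ` such that `P` is harmonic along the line `{(ζw, w)}`. -/
def harmDirs (P : ℂ × ℂ → ℝ) : Set ℂ := {ζ | IsHarmonic fun w => P (ζ * w, w)}

/-- The union of all complex lines through `0` along which `P` is harmonic. -/
def linesUnion (P : ℂ × ℂ → ℝ) : Set (ℂ × ℂ) :=
  {z | (∃ ζ ∈ harmDirs P, z.1 = ζ * z.2) ∨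
       (IsHarmonic (fun w => P (w, 0)) ∧ z.2 = 0)}

/-- `P` is harmonic along the smooth part of the set `V`: for every injective
holomorphic parametrization by the unit disc of a piece of `V`, the pullback
of `P` is harmonic. -/
def HarmonicAlong (P : ℂ × ℂ → ℝ) (V : Set (ℂ × ℂ)) : Prop :=
  ∀ φ : ℂ → ℂ × ℂ, DifferentiableOn ℂ φ (Metric.ball 0 1) →
    Set.InjOn φ (Metric.ball 0 1) → φ '' Metric.ball 0 1 ⊆ V →
    ∀ ζ ∈ Metric.ball (0 : ℂ) 1, lap (fun w => P (φ w)) ζ = 0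

/-- `S` contains no complex-analytic subvariety of positive dimension. -/
def NoPosDimVariety (S : Set (ℂ × ℂ)) : Prop :=
  ∀ φ : ℂ → ℂ × ℂ, DifferentiableOn ℂ φ (Metric.ball 0 1) →
    φ '' Metric.ball 0 1 ⊆ S →
    ∀ x ∈ Metric.ball (0 : ℂ) 1, ∀ y ∈ Metric.ball (0 : ℂ) 1, φ x = φ y

/-- Property (A) for a homogeneous polynomial `P`. -/
def PropertyA (P : ℂ × ℂ → ℝ) : Prop :=
  NoPosDimVariety (leviDegen P \ linesUnion P) ∧
  ∃ W : Set (ℂ × ℂ), IsClosed W ∧ (∀ z ∈ W, ∀ t : ℝ, 0 < t → t • z ∈ W) ∧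
    leviDegen P \ linesUnion P ⊆ W ∧ interior W ∩ linesUnion P = ∅

/-- Property (B): there is an entire function all of whose level curves have
smooth part along which `P` is harmonic. -/
def PropertyB (P : ℂ × ℂ → ℝ) : Prop :=
  ∃ H : ℂ × ℂ → ℂ, Differentiable ℂ H ∧ ∀ c : ℂ, HarmonicAlong P (H ⁻¹' {c})

/-- The anisotropic dilation `(t^{1/m₁}z₁, t^{1/m₂}z₂)`. -/
def wdil (m₁ m₂ : ℕ) (t : ℝ) (z : ℂ × ℂ) : ℂ × ℂ :=
  (((t ^ ((m₁ : ℝ)⁻¹) : ℝ) : ℂ) * z.1, ((t ^ ((m₂ : ℝ)⁻¹) : ℝ) : ℂ) * z.2)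

/-- `(m₁,m₂)`-homogeneity with weight `r`. -/
def WHomog (m₁ m₂ : ℕ) (P : ℂ × ℂ → ℝ) (r : ℝ) : Prop :=
  ∀ t : ℝ, 0 < t → ∀ z : ℂ × ℂ, P (wdil m₁ m₂ t z) = t ^ r * P z

/-- The weighted curve `{z₁^a = ζ z₂^b}`. -/
def wCurve (a b : ℕ) (ζ : ℂ) : Set (ℂ × ℂ) := {z | z.1 ^ a = ζ * z.2 ^ b}

/-- The parameters `ζ ∈ ℂ` of weighted curves along which `P` is harmonic. -/
def wHarmDirs (P : ℂ × ℂ → ℝ) (a b : ℕ) : Set ℂ :=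
  {ζ | HarmonicAlong P (wCurve a b ζ)}

/-- The union of all curves in `E(P)` (including the one for `ζ = ∞`). -/
def wEUnion (P : ℂ × ℂ → ℝ) (a b : ℕ) : Set (ℂ × ℂ) :=
  {z | (∃ ζ ∈ wHarmDirs P a b, z.1 ^ a = ζ * z.2 ^ b) ∨
       (HarmonicAlong P {w : ℂ × ℂ | w.2 = 0} ∧ z.2 = 0)}

/-- Property (A) in the `(m₁,m₂)`-homogeneous setting (with wedges). -/
def PropertyAW (m₁ m₂ : ℕ) (P : ℂ × ℂ → ℝ) : Prop :=
  NoPosDimVariety (leviDegen P \ wEUnion P (m₁ / Nat.gcd m₁ m₂) (m₂ / Nat.gcd m₁ m₂)) ∧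
  ∃ W : Set (ℂ × ℂ), IsClosed W ∧ (∀ z ∈ W, ∀ t : ℝ, 0 < t → wdil m₁ m₂ t z ∈ W) ∧
    leviDegen P \ wEUnion P (m₁ / Nat.gcd m₁ m₂) (m₂ / Nat.gcd m₁ m₂) ⊆ W ∧
    interior W ∩ wEUnion P (m₁ / Nat.gcd m₁ m₂) (m₂ / Nat.gcd m₁ m₂) = ∅

section PositiveHomogeneity

/-- Positive homogeneity of real degree `a`. -/
def IsPosHomogeneous {E F : Type*} [SMul ℝ E] [SMul ℝ F] (a : ℝ) (u : E → F) : Prop :=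
  ∀ ⦃t : ℝ⦄, 0 < t → ∀ x, u (t • x) = t ^ a • u x

variable {E F : Type*} [NormedAddCommGroup E] [NormedSpace ℝ E] [NormedAddCommGroup F]
  [NormedSpace ℝ F]

lemma IsPosHomogeneous.fderiv_apply_self {a : ℝ} {u : E → F} {x : E}
    (hu : IsPosHomogeneous a u) (hx : DifferentiableAt ℝ u x) :
    fderiv ℝ u x x = a • u x := by
  have hray : HasDerivAt (fun t : ℝ ↦ u (t • x)) (fderiv ℝ u x x) 1 := by
    have hline : HasDerivAt (fun t : ℝ ↦ t • x) x 1 := by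
      simpa using (hasDerivAt_id (1 : ℝ)).smul_const x
    have hx' : HasFDerivAt u (fderiv ℝ u x) ((1 : ℝ) • x) := by
      simpa using hx.hasFDerivAt
    exact hx'.comp_hasDerivAt 1 hline
  have hpow : HasDerivAt (fun t : ℝ ↦ t ^ a • u x) (a • u x) 1 := by
    simpa using (Real.hasDerivAt_rpow_const (p := a) (.inl one_ne_zero)).smul_const (u x)
  refine hray.unique (hpow.congr_of_eventuallyEq ?_)
  filter_upwards [lt_mem_nhds zero_lt_one] with t ht using hu ht x

lemma IsPosHomogeneous.circleAverage {a : ℝ} {u : ℂ → F} (hu : IsPosHomogeneous a u)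
    {r : ℝ} (hr : 0 < r) : Real.circleAverage u 0 r = r ^ a • Real.circleAverage u 0 1 := by
  rw [← Real.circleAverage_fun_smul]
  simp only [Real.circleAverage_def, circleMap_zero, ofReal_one, one_mul, ← hu hr, real_smul]

end PositiveHomogeneity

section PolarLaplacian

open InnerProductSpace Laplacian

variable {F : Type*} [NormedAddCommGroup F] [NormedSpace ℝ F] {u : ℂ → F}

/-- The derivative of `u` along the vector field `z ↦ c * z`. For `c = 1` this is the radial
derivative `r ∂/∂r` and for `c = I` the angular derivative `∂/∂θ`. -/
def mulFieldDeriv (c : ℂ) (u : ℂ → F) (z : ℂ) : F := fderiv ℝ u z (c * z)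

lemma contDiff_mulFieldDeriv {n m : WithTop ℕ∞} (hu : ContDiff ℝ n u) (hmn : m + 1 ≤ n) (c : ℂ) :
    ContDiff ℝ m (mulFieldDeriv c u) :=
  (hu.fderiv_right hmn).clm_apply (by fun_prop)

lemma mulFieldDeriv_mulFieldDeriv {z : ℂ} (hu : DifferentiableAt ℝ (fderiv ℝ u) z) (c d : ℂ) :
    mulFieldDeriv d (mulFieldDeriv c u) z =
      fderiv ℝ (fderiv ℝ u) z (d * z) (c * z) + fderiv ℝ u z (c * (d * z)) := by
  have hfield : HasFDerivAt (fun w ↦ c * w) (ContinuousLinearMap.mul ℝ ℂ c) z :=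
    (ContinuousLinearMap.mul ℝ ℂ c).hasFDerivAt
  have hprod : HasFDerivAt (mulFieldDeriv c u) _ z := hu.hasFDerivAt.clm_apply hfield
  simp [mulFieldDeriv.eq_1 d, hprod.fderiv, add_comm]

lemma bilin_self_add_bilin_I_mul_self (B : ℂ →L[ℝ] ℂ →L[ℝ] F) (z : ℂ) :
    B z z + B (I * z) (I * z) = ‖z‖ ^ 2 • (B 1 1 + B I I) := by
  have hz : z = z.re • (1 : ℂ) + z.im • I := by simp
  have hIz : I * z = (-z.im) • (1 : ℂ) + z.re • I := by apply Complex.ext <;> simp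
  rw [hIz, Complex.sq_norm, normSq_apply]
  nth_rw 1 2 [hz]
  simp only [map_add, map_smul, add_apply, smul_apply]
  module

lemma radial_add_angular_eq_laplacian {z : ℂ} (hu : DifferentiableAt ℝ (fderiv ℝ u) z) :
    mulFieldDeriv 1 (mulFieldDeriv 1 u) z + mulFieldDeriv I (mulFieldDeriv I u) z =
      ‖z‖ ^ 2 • Δ u z := by
  have hlap : ‖z‖ ^ 2 • Δ u z =
      fderiv ℝ (fderiv ℝ u) z z z + fderiv ℝ (fderiv ℝ u) z (I * z) (I * z) := by
    simp [bilin_self_add_bilin_I_mul_self, laplacian_eq_iteratedFDeriv_complexPlane,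
      iteratedFDeriv_two_apply]
  rw [mulFieldDeriv_mulFieldDeriv hu, mulFieldDeriv_mulFieldDeriv hu, hlap, ← mul_assoc I I,
    I_mul_I]
  simp only [one_mul, neg_mul, map_neg]
  abel

lemma circleAverage_mulFieldDeriv_I [CompleteSpace F] (hu : ContDiff ℝ 1 u) (r : ℝ) :
    Real.circleAverage (mulFieldDeriv I u) 0 r = 0 := by
  have hderiv (θ : ℝ) : HasDerivAt (u ∘ circleMap 0 r)
      (mulFieldDeriv I u (circleMap 0 r θ)) θ := by
    simpa [mulFieldDeriv, mul_comm I] using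
      ((hu.differentiable one_ne_zero _).hasFDerivAt.comp_hasDerivAt θ
        (hasDerivAt_circleMap 0 r θ))
  have hcont : Continuous (mulFieldDeriv I u) :=
    (contDiff_mulFieldDeriv hu (m := 0) le_rfl I).continuous
  rw [Real.circleAverage_def, intervalIntegral.integral_eq_sub_of_hasDerivAt
    (fun θ _ ↦ hderiv θ) ((hcont.comp (continuous_circleMap 0 r)).intervalIntegrable _ _)]
  simp [(periodic_circleMap 0 r).eq]

lemma IsPosHomogeneous.mulFieldDeriv_one_mulFieldDeriv_one {a : ℝ} (hhom : IsPosHomogeneous a u)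
    (hu : Differentiable ℝ u) (z : ℂ) :
    mulFieldDeriv 1 (mulFieldDeriv 1 u) z = a ^ 2 • u z := by
  have heuler (w : ℂ) : fderiv ℝ u w w = a • u w := hhom.fderiv_apply_self (hu w)
  have hfirst : mulFieldDeriv 1 u = a • u := by
    ext w
    simp [mulFieldDeriv, heuler]
  simp [hfirst, mulFieldDeriv, fderiv_const_smul (hu z), heuler, smul_smul, sq]

lemma IsPosHomogeneous.sq_smul_circleAverage_laplacian [CompleteSpace F] {a : ℝ}
    (hhom : IsPosHomogeneous a u) (hu : ContDiff ℝ 2 u) (r : ℝ) :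
    r ^ 2 • Real.circleAverage (Δ u) 0 r = a ^ 2 • Real.circleAverage u 0 r := by
  have hangular : ContDiff ℝ 1 (mulFieldDeriv I u) := contDiff_mulFieldDeriv hu le_rfl I
  have hsum : EqOn (fun z ↦ a ^ 2 • u z + mulFieldDeriv I (mulFieldDeriv I u) z)
      (fun z ↦ r ^ 2 • Δ u z) (sphere 0 |r|) := by
    intro z hz
    have hdiff := (hu.fderiv_right (m := 1) le_rfl).differentiable one_ne_zero z
    have hnorm : ‖z‖ ^ 2 = r ^ 2 := by rw [mem_sphere_zero_iff_norm.1 hz, sq_abs]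
    simpa only [hhom.mulFieldDeriv_one_mulFieldDeriv_one (hu.differentiable two_ne_zero),
      hnorm] using radial_add_angular_eq_laplacian hdiff
  rw [← Real.circleAverage_fun_smul, ← Real.circleAverage_congr_sphere hsum,
    Real.circleAverage_fun_add, circleAverage_mulFieldDeriv_I hangular, add_zero,
    Real.circleAverage_fun_smul]
  · exact (hu.continuous.const_smul _).continuousOn.circleIntegrable'
  · have hcont := (contDiff_mulFieldDeriv hangular (m := 0) le_rfl I).continuous
    exact hcont.continuousOn.circleIntegrable'

end PolarLaplacian

section Wirtinger

open InnerProductSpace Laplacian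

lemma lap_eq_laplacian {u : ℂ → ℝ} {z : ℂ} (hu : ContDiffAt ℝ 2 u z) :
    lap u z = (Δ u z : ℂ) := by
  set f : ℂ → ℂ := fun w ↦ (u w : ℂ)
  have hfC : ContDiffAt ℝ 2 f z := ofRealCLM.contDiff.contDiffAt.comp z hu
  have hdiff : DifferentiableAt ℝ (fderiv ℝ f) z :=
    (hfC.fderiv_right (m := 1) le_rfl).differentiableAt one_ne_zero
  have hsymm : fderiv ℝ (fderiv ℝ f) z 1 I = fderiv ℝ (fderiv ℝ f) z I 1 :=
    hfC.isSymmSndFDerivAt (by simp) 1 I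
  have hdbar : HasFDerivAt (wdbar1 f) _ z :=
    ((hdiff.hasFDerivAt.clm_apply (hasFDerivAt_const (1 : ℂ) z)).add
      ((hdiff.hasFDerivAt.clm_apply (hasFDerivAt_const I z)).const_mul I)).const_mul (1 / 2)
  have hΔ : (Δ u z : ℂ) = Δ f z := (hu.laplacian_CLM_comp_left (l := ofRealCLM)).symm
  rw [hΔ, laplacian_eq_iteratedFDeriv_complexPlane, lap, wd1, hdbar.fderiv]
  simp only [iteratedFDeriv_two_apply, Matrix.cons_val_zero, Matrix.cons_val_one]
  simp [hsymm]
  linear_combination (-fderiv ℝ (fderiv ℝ f) z I I) * I_mul_I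

lemma fderiv_comp_line {E F : Type*} [NormedAddCommGroup E] [NormedSpace ℂ E]
    [NormedAddCommGroup F] [NormedSpace ℝ F] {f : E → F} {z v : E} {ζ : ℂ}
    (hf : DifferentiableAt ℝ f (z + ζ • v)) (c : ℂ) :
    fderiv ℝ (fun ζ ↦ f (z + ζ • v)) ζ c = fderiv ℝ f (z + ζ • v) (c • v) := by
  have hline : HasFDerivAt (fun ζ : ℂ ↦ z + ζ • v)
      ((ContinuousLinearMap.id ℝ ℂ).smulRight v) ζ :=
    ((hasFDerivAt_id ζ).smul_const v).const_add z
  have hcomp : HasFDerivAt (fun ζ : ℂ ↦ f (z + ζ • v)) _ ζ := hf.hasFDerivAt.comp ζ hline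
  simp [hcomp.fderiv]

lemma wd1_comp_line {f : ℂ × ℂ → ℂ} {z v : ℂ × ℂ} {ζ : ℂ}
    (hf : DifferentiableAt ℝ f (z + ζ • v)) :
    wd1 (fun ζ ↦ f (z + ζ • v)) ζ = wd f v (z + ζ • v) := by
  simp only [wd1, wd, fderiv_comp_line hf, one_smul]

lemma wdbar1_comp_line {f : ℂ × ℂ → ℂ} {z v : ℂ × ℂ} {ζ : ℂ}
    (hf : DifferentiableAt ℝ f (z + ζ • v)) :
    wdbar1 (fun ζ ↦ f (z + ζ • v)) ζ = wdbar f v (z + ζ • v) := by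
  simp only [wdbar1, wdbar, fderiv_comp_line hf, one_smul]

lemma contDiff_wdbar {f : ℂ × ℂ → ℂ} {n m : WithTop ℕ∞} (hf : ContDiff ℝ n f) (hmn : m + 1 ≤ n)
    (v : ℂ × ℂ) : ContDiff ℝ m (wdbar f v) := by
  have := hf.fderiv_right hmn
  unfold wdbar
  fun_prop

lemma contDiff_wd {f : ℂ × ℂ → ℂ} {n m : WithTop ℕ∞} (hf : ContDiff ℝ n f) (hmn : m + 1 ≤ n)
    (v : ℂ × ℂ) : ContDiff ℝ m (wd f v) := by
  have := hf.fderiv_right hmn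
  unfold wd
  fun_prop

variable {P : ℂ × ℂ → ℝ}

lemma continuous_mixedDeriv (hP : ContDiff ℝ 2 P) (v w : ℂ × ℂ) :
    Continuous (mixedDeriv P v w) :=
  (contDiff_wd (m := 0) (contDiff_wdbar (m := 1) (ofRealCLM.contDiff.comp hP) le_rfl w)
    le_rfl v).continuous

lemma lap_comp_line (hP : ContDiff ℝ 2 P) (z v : ℂ × ℂ) (ζ : ℂ) :
    lap (fun ζ ↦ P (z + ζ • v)) ζ = 4 * mixedDeriv P v v (z + ζ • v) := by
  have hf : ContDiff ℝ 2 fun w ↦ (P w : ℂ) := ofRealCLM.contDiff.comp hP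
  have hdbar : wdbar1 (fun ζ ↦ (P (z + ζ • v) : ℂ)) =
      fun ζ ↦ wdbar (fun w ↦ (P w : ℂ)) v (z + ζ • v) :=
    funext fun ζ ↦ wdbar1_comp_line (hf.differentiable two_ne_zero _)
  rw [lap, hdbar, wd1_comp_line
    ((contDiff_wdbar (m := 1) hf le_rfl v).differentiable one_ne_zero _), mixedDeriv]

lemma lap_slice_fst (hP : ContDiff ℝ 2 P) (z w : ℂ) :
    lap (fun z ↦ P (z, w)) z = 4 * mixedDeriv P (1, 0) (1, 0) (z, w) := by
  simpa using lap_comp_line hP (0, w) (1, 0) z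

lemma lap_slice_snd (hP : ContDiff ℝ 2 P) (z w : ℂ) :
    lap (fun w ↦ P (z, w)) w = 4 * mixedDeriv P (0, 1) (0, 1) (z, w) := by
  simpa using lap_comp_line hP (z, 0) (0, 1) w

lemma lap2_eq_lap_slices (hP : ContDiff ℝ 2 P) (z w : ℂ) :
    lap2 P (z, w) = lap (fun z ↦ P (z, w)) z + lap (fun w ↦ P (z, w)) w := by
  rw [lap_slice_fst hP, lap_slice_snd hP, lap2, mul_add]

lemma continuous_laplacian_slice_snd (hP : ContDiff ℝ 2 P) :
    Continuous fun p : ℂ × ℂ ↦ Δ (fun w ↦ P (p.1, w)) p.2 := by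
  have hre (p : ℂ × ℂ) :
      Δ (fun w ↦ P (p.1, w)) p.2 = (4 * mixedDeriv P (0, 1) (0, 1) p).re := by
    rw [← lap_slice_snd hP, lap_eq_laplacian (by fun_prop), ofReal_re]
  simp only [hre]
  exact continuous_re.comp (continuous_const.mul (continuous_mixedDeriv hP _ _))

lemma IsPsh.subharmonic_slice_fst (hpsh : IsPsh P) (hP : ContDiff ℝ 2 P) (w : ℂ) :
    Subharmonic fun z ↦ P (z, w) := fun z ↦ by
  simpa [lap_slice_fst hP, leviForm] using hpsh (z, w) (1, 0)

lemma IsPsh.subharmonic_slice_snd (hpsh : IsPsh P) (hP : ContDiff ℝ 2 P) (z : ℂ) :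
    Subharmonic fun w ↦ P (z, w) := fun w ↦ by
  simpa [lap_slice_snd hP, leviForm] using hpsh (z, w) (0, 1)

lemma IsRealPoly2.contDiff {n : WithTop ℕ∞} (hP : IsRealPoly2 P) : ContDiff ℝ n P := by
  obtain ⟨p, hp⟩ := hP
  let coords : Fin 4 → ℂ × ℂ →L[ℝ] ℂ :=
    ![.fst ℝ ℂ ℂ, conjCLE.toContinuousLinearMap ∘L .fst ℝ ℂ ℂ,
      .snd ℝ ℂ ℂ, conjCLE.toContinuousLinearMap ∘L .snd ℝ ℂ ℂ]
  have hcoords (z : ℂ × ℂ) : ![z.1, conj z.1, z.2, conj z.2] = (coords · z) := by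
    ext i
    fin_cases i <;> simp [coords]
  have hre : P = fun z ↦ reCLM (MvPolynomial.eval (coords · z) p) := by
    ext z
    simp [← hcoords, ← hp]
  rw [hre]
  exact reCLM.contDiff.comp (AnalyticOnNhd.eval_continuousLinearMap' coords p).contDiff

end Wirtinger

section TorusAverage

variable {F : Type*} [NormedAddCommGroup F] [NormedSpace ℝ F] {f : ℂ × ℂ → F}

/-- The average of `f` over the torus `|z| = |r|, |w| = |s|` in `ℂ²`, as an iterated circle
average. -/
def torusAverage (f : ℂ × ℂ → F) (r s : ℝ) : F :=
  Real.circleAverage (fun z ↦ Real.circleAverage (fun w ↦ f (z, w)) 0 s) 0 r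

lemma torusAverage_one_one (f : ℂ × ℂ → F) :
    torusAverage f 1 1 = ((2 * Real.pi)⁻¹ * (2 * Real.pi)⁻¹) •
      ∫ θ in (0 : ℝ)..(2 * Real.pi), ∫ τ in (0 : ℝ)..(2 * Real.pi),
        f (exp (θ * I), exp (τ * I)) := by
  simp [torusAverage, Real.circleAverage_def, circleMap_zero, smul_smul,
    intervalIntegral.integral_smul]

lemma torusAverage_comp_swap (hf : Continuous f) (r s : ℝ) :
    torusAverage (f ∘ Prod.swap) r s = torusAverage f s r := by
  have hcont : Continuous
      (Function.uncurry fun φ θ : ℝ ↦ f (circleMap 0 s θ, circleMap 0 r φ)) :=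
    hf.comp (by fun_prop : Continuous fun x : ℝ × ℝ ↦ (circleMap 0 s x.2, circleMap 0 r x.1))
  have hint : MeasureTheory.IntegrableOn
      (Function.uncurry fun φ θ : ℝ ↦ f (circleMap 0 s θ, circleMap 0 r φ))
      (uIoc 0 (2 * Real.pi) ×ˢ uIoc 0 (2 * Real.pi)) :=
    (hcont.continuousOn.integrableOn_compact (isCompact_uIcc.prod isCompact_uIcc)).mono_set
      (prod_mono uIoc_subset_uIcc uIoc_subset_uIcc)
  simp only [torusAverage, Real.circleAverage_def, Function.comp_apply, Prod.swap_prod_mk,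
    intervalIntegral.integral_smul]
  rw [MeasureTheory.intervalIntegral_intervalIntegral_swap hint]

lemma continuous_circleAverage_slice (hf : Continuous f) (c : ℂ) (s : ℝ) :
    Continuous fun z ↦ Real.circleAverage (fun w ↦ f (z, w)) c s := by
  have hparam : Continuous (Function.uncurry fun (z : ℂ) (θ : ℝ) ↦ f (z, circleMap c s θ)) :=
    hf.comp (by fun_prop : Continuous fun x : ℂ × ℝ ↦ (x.1, circleMap c s x.2))
  exact (intervalIntegral.continuous_parametric_intervalIntegral_of_continuous' hparam
    _ _).const_smul _

lemma torusAverage_eq_rpow_smul {a b r s : ℝ} (hfst : ∀ w, IsPosHomogeneous a fun z ↦ f (z, w))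
    (hsnd : ∀ z, IsPosHomogeneous b fun w ↦ f (z, w)) (hr : 0 < r) (hs : 0 < s) :
    torusAverage f r s = (r ^ a * s ^ b) • torusAverage f 1 1 := by
  have hmean : IsPosHomogeneous a fun z ↦ Real.circleAverage (fun w ↦ f (z, w)) 0 1 :=
    fun t ht z ↦ by
      rw [← Real.circleAverage_fun_smul]
      exact congrArg (Real.circleAverage · 0 1) (funext fun w ↦ hfst w ht z)
  simp only [torusAverage, fun z ↦ (hsnd z).circleAverage hs, Real.circleAverage_fun_smul]
  rw [hmean.circleAverage hr, smul_smul, mul_comm]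

open InnerProductSpace Laplacian in
lemma sq_smul_torusAverage_laplacian_slice_snd [CompleteSpace F] {b : ℝ} (hf : ContDiff ℝ 2 f)
    (hhom : ∀ z, IsPosHomogeneous b fun w ↦ f (z, w)) (r s : ℝ) :
    s ^ 2 • torusAverage (fun p ↦ Δ (fun w ↦ f (p.1, w)) p.2) r s =
      b ^ 2 • torusAverage f r s := by
  rw [torusAverage, torusAverage, ← Real.circleAverage_fun_smul, ← Real.circleAverage_fun_smul]
  exact congrArg (Real.circleAverage · 0 r)
    (funext fun z ↦ (hhom z).sq_smul_circleAverage_laplacian (by fun_prop) s)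

end TorusAverage

section Positivity

lemma eq_zero_of_circleAverage_nonpos {f : ℂ → ℝ} {c : ℂ} {R : ℝ}
    (hf : ContinuousOn f (sphere c |R|)) (hnonneg : ∀ z ∈ sphere c |R|, 0 ≤ f z)
    (hmean : Real.circleAverage f c R ≤ 0) : ∀ z ∈ sphere c |R|, f z = 0 := by
  rw [← image_circleMap_Ioc]
  rintro _ ⟨θ, hθ, rfl⟩
  by_contra hne
  have hpos : 0 < ∫ φ in (0 : ℝ)..(2 * Real.pi), f (circleMap c R φ) :=
    intervalIntegral.integral_pos Real.two_pi_pos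
      (hf.comp (continuous_circleMap c R).continuousOn fun φ _ ↦ circleMap_mem_sphere' c R φ)
      (fun φ _ ↦ hnonneg _ (circleMap_mem_sphere' c R φ))
      ⟨θ, Ioc_subset_Icc_self hθ,
        (hnonneg _ (circleMap_mem_sphere' c R θ)).lt_of_ne' hne⟩
  exact hmean.not_gt (mul_pos (inv_pos.2 Real.two_pi_pos) hpos)

variable {f : ℂ × ℂ → ℝ}

lemma eq_zero_on_torus_of_torusAverage_nonpos (hf : Continuous f) (hnonneg : ∀ p, 0 ≤ f p)
    {r s : ℝ} (hmean : torusAverage f r s ≤ 0) {z w : ℂ} (hz : z ∈ sphere 0 |r|)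
    (hw : w ∈ sphere 0 |s|) : f (z, w) = 0 := by
  have hslice : Real.circleAverage (fun w ↦ f (z, w)) 0 s = 0 :=
    eq_zero_of_circleAverage_nonpos (continuous_circleAverage_slice hf 0 s).continuousOn
      (fun _ _ ↦ Real.circleAverage_nonneg_of_nonneg fun _ _ ↦ hnonneg _) hmean z hz
  exact eq_zero_of_circleAverage_nonpos (by fun_prop) (fun _ _ ↦ hnonneg _) hslice.le w hw

lemma eq_zero_of_forall_torusAverage_nonpos (hf : Continuous f) (hnonneg : ∀ p, 0 ≤ f p)
    (hmean : ∀ r s, 0 < r → 0 < s → torusAverage f r s ≤ 0) : f = 0 := by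
  have hdense : Dense ({0}ᶜ ×ˢ {0}ᶜ : Set (ℂ × ℂ)) :=
    (dense_compl_singleton 0).prod (dense_compl_singleton 0)
  refine Continuous.ext_on hdense hf continuous_const ?_
  rintro ⟨z, w⟩ ⟨hz, hw⟩
  exact eq_zero_on_torus_of_torusAverage_nonpos hf hnonneg
    (hmean ‖z‖ ‖w‖ (norm_pos_iff.2 hz) (norm_pos_iff.2 hw)) (by simp) (by simp)

open InnerProductSpace Laplacian in
lemma isHarmonic_slice_snd_of_torusAverage_nonpos {b : ℝ} {Q : ℂ × ℂ → ℝ} (hQ : ContDiff ℝ 2 Q)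
    (hsub : ∀ z, Subharmonic fun w ↦ Q (z, w))
    (hhom : ∀ z, IsPosHomogeneous b fun w ↦ Q (z, w))
    (hmean : ∀ r s, 0 < r → 0 < s → torusAverage Q r s ≤ 0) (z : ℂ) :
    IsHarmonic fun w ↦ Q (z, w) := by
  set L : ℂ × ℂ → ℝ := fun p ↦ Δ (fun w ↦ Q (p.1, w)) p.2
  have hlap (z w : ℂ) : lap (fun w ↦ Q (z, w)) w = L (z, w) := lap_eq_laplacian (by fun_prop)
  have hLnonneg (p : ℂ × ℂ) : 0 ≤ L p := by simpa [hlap] using hsub p.1 p.2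
  have hLmean (r s : ℝ) (hr : 0 < r) (hs : 0 < s) : torusAverage L r s ≤ 0 := by
    have hscaled : s ^ 2 * torusAverage L r s = b ^ 2 * torusAverage Q r s :=
      sq_smul_torusAverage_laplacian_slice_snd hQ hhom r s
    have hnonpos : s ^ 2 * torusAverage L r s ≤ 0 :=
      hscaled.trans_le (mul_nonpos_of_nonneg_of_nonpos (sq_nonneg b) (hmean r s hr hs))
    exact nonpos_of_mul_nonpos_right hnonpos (by positivity)
  have hLzero : L = 0 :=
    eq_zero_of_forall_torusAverage_nonpos (continuous_laplacian_slice_snd hQ) hLnonneg hLmean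
  intro w
  rw [hlap, hLzero, Pi.zero_apply, ofReal_zero]

theorem positive_torus_average_general (a b : ℝ) (Q : ℂ × ℂ → ℝ) (hQ : ContDiff ℝ 2 Q)
    (hsub1 : ∀ w, Subharmonic fun z ↦ Q (z, w)) (hsub2 : ∀ z, Subharmonic fun w ↦ Q (z, w))
    (hnh : ¬ ∀ z, lap2 Q z = 0)
    (hhom1 : ∀ w, IsPosHomogeneous a fun z ↦ Q (z, w))
    (hhom2 : ∀ z, IsPosHomogeneous b fun w ↦ Q (z, w)) :
    0 < ∫ θ in (0 : ℝ)..(2 * Real.pi), ∫ τ in (0 : ℝ)..(2 * Real.pi),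
        Q (exp (θ * I), exp (τ * I)) := by
  by_contra! hnonpos
  have hmean (r s : ℝ) (hr : 0 < r) (hs : 0 < s) : torusAverage Q r s ≤ 0 := by
    rw [torusAverage_eq_rpow_smul hhom1 hhom2 hr hs, torusAverage_one_one, smul_smul]
    exact smul_nonpos_of_nonneg_of_nonpos (by positivity) hnonpos
  have hharm2 (z : ℂ) : IsHarmonic fun w ↦ Q (z, w) :=
    isHarmonic_slice_snd_of_torusAverage_nonpos hQ hsub2 hhom2 hmean z
  have hharm1 (w : ℂ) : IsHarmonic fun z ↦ Q (z, w) :=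
    isHarmonic_slice_snd_of_torusAverage_nonpos (Q := Q ∘ Prod.swap)
      (hQ.comp (contDiff_snd.prodMk contDiff_fst)) hsub1 hhom1
      (fun r s hr hs ↦ (torusAverage_comp_swap hQ.continuous r s).trans_le (hmean s r hs hr)) w
  exact hnh fun ⟨z, w⟩ ↦ by rw [lap2_eq_lap_slices hQ, hharm1 w z, hharm2 z w, add_zero]

end Positivity

/-- a plurisubharmonic, non-harmonic, `(2p,2q)`-bihomogeneous
polynomial has strictly positive average over the torus, i.e. the coefficient of
`|z₁|^{2p}|z₂|^{2q}` is positive. -/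
theorem positive_torus_average (p q : ℕ) (hp : 0 < p) (hq : 0 < q) (Q : ℂ × ℂ → ℝ)
    (hpoly : IsRealPoly2 Q) (hpsh : IsPsh Q) (hnh : ¬ ∀ z, lap2 Q z = 0)
    (hhom1 : ∀ t : ℝ, 0 < t → ∀ z : ℂ × ℂ, Q ((t : ℂ) * z.1, z.2) = t ^ (2 * p) * Q z)
    (hhom2 : ∀ t : ℝ, 0 < t → ∀ z : ℂ × ℂ, Q (z.1, (t : ℂ) * z.2) = t ^ (2 * q) * Q z) :
    0 < ∫ θ in (0:ℝ)..(2 * Real.pi), ∫ τ in (0:ℝ)..(2 * Real.pi),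
        Q (Complex.exp (θ * Complex.I), Complex.exp (τ * Complex.I)) := by
  have hQ : ContDiff ℝ 2 Q := hpoly.contDiff
  exact positive_torus_average_general (2 * p : ℕ) (2 * q : ℕ) Q hQ
    (hpsh.subharmonic_slice_fst hQ) (hpsh.subharmonic_slice_snd hQ) hnh
    (fun w t ht z ↦ by simpa only [Real.rpow_natCast] using! hhom1 t ht (z, w))
    (fun z t ht w ↦ by simpa only [Real.rpow_natCast] using! hhom2 t ht (z, w))

end
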